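/- For every integer n > 1 and every DWA B = ({a,b,i}, Q, q₀, δ, c) with exactly n + 2 states that realizes O_n, write q_j = δ̂(q₀, i^j) for 0 ≤ j ≤ n. Then for every j < n, c(q_j, a) = −Σ_{k=j+1}^{n} c(q_k, b) and c(q_j, b) = −Σ_{k=j+1}^{n} c(q_k, a); consequently c(q_0, a) = 2^{n−2}·(c(q_{n−1}, a) + c(q_n, a)) ≥ 2^{n−1}. In particular, every DWA with the minimal number of states realizing O_n has a weight that is exponential in n, even though O_n is realized by some DWA with all weights in {−1, 0, 1}. -/

import Mathlib

/-- A deterministic weighted automaton (DWA) over alphabet `A` with state space `Q`. -/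
structure DWA (A : Type) (Q : Type) where
  init : Q
  δ : Q → A → Q
  c : Q → A → ℤ

/-- The extended transition function `δ̂`. -/
def DWA.run {A Q : Type} (M : DWA A Q) (q : Q) (w : List A) : Q :=
  w.foldl M.δ q

/-- The accumulated weight of the run on `w` starting in state `q`. -/
def DWA.valFrom {A Q : Type} (M : DWA A Q) : Q → List A → ℤ
  | _, [] => 0
  | q, x :: w => M.c q x + M.valFrom (M.δ q x) w

/-- The value `A(w)` of a word: the sum of the weights along the run from the initial state. -/
def DWA.val {A Q : Type} (M : DWA A Q) (w : List A) : ℤ :=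
  M.valFrom M.init w

/-- The three-letter alphabet `{a, b, i}`. -/
inductive ABI where
  | a : ABI
  | b : ABI
  | i : ABI
deriving DecidableEq

open Classical in
/-- The observation function `O_n` on nonempty words over `{a, b, i}`:
`O_n(w) = 1` if `w` consists only of `i`'s, or `i^{n+1}` is a prefix of `w`, or
`i^k·a·b^{n-k}` or `i^k·b·a^{n-k}` is a prefix of `w` for some `k < n`; otherwise `O_n(w) = 2`
if the first letter of `w` different from `i` is `a`, and `O_n(w) = 0` if it is `b`. -/
noncomputable def Obs (n : ℕ) (w : List ABI) : ℕ :=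
  if (∀ x ∈ w, x = ABI.i) ∨
      (List.replicate (n + 1) ABI.i <+: w) ∨
      (∃ k < n, List.replicate k ABI.i ++ [ABI.a] ++ List.replicate (n - k) ABI.b <+: w) ∨
      (∃ k < n, List.replicate k ABI.i ++ [ABI.b] ++ List.replicate (n - k) ABI.a <+: w)
  then 1
  else if ∃ k, List.replicate k ABI.i ++ [ABI.a] <+: w then 2
  else 0

/-- A DWA `M` over `{a, b, i}` realizes `O_n` if, for every nonempty word `w`,
`M(w) < 0 ↔ O_n(w) = 0`, `M(w) = 0 ↔ O_n(w) = 1`, and `M(w) > 0 ↔ O_n(w) = 2`. -/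
def Realizes {Q : Type} (n : ℕ) (M : DWA ABI Q) : Prop :=
  ∀ w : List ABI, w ≠ [] →
    (M.val w < 0 ↔ Obs n w = 0) ∧ (M.val w = 0 ↔ Obs n w = 1) ∧ (0 < M.val w ↔ Obs n w = 2)

/-! Let `q_k` be the state reached on `i^k`. State `q_{n+1}` is dead (every word read from it has
value `0`), the states `q_0, …, q_n` are not, so the `q_k` with `k ≤ n + 1` are all the states of a
DWA with `n + 2` states. For `k < n`, reading `b`s from `δ(q_k, a)` first hits the dead state after
exactly `n - k` letters, and symmetrically with `a` and `b` exchanged. By induction on `d`, the only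
state at distance `d ≤ n` from the dead state along `a`, and the only one along `b`, is
`q_{n+1-d}`; hence `δ(q_k, a) = δ(q_k, b) = q_{k+1}`. The value of `i^j a b^{n-j}` is then
`c(q_j, a) + ∑_{k=j+1}^n c(q_k, b)`, and its vanishing yields a recurrence whose differences
`c(q_j, a) - c(q_j, b)` double at each step. -/

section Absorption

/-- The orbit of `p` under `f` reaches `z` at time `d`, not earlier, and stays there. In the
automaton, `f` reads a fixed letter and `z` is the dead state. -/
def AbsorbedAt {Q : Type*} (f : Q → Q) (z p : Q) (d : ℕ) : Prop :=
  ∀ m, f^[m] p = z ↔ d ≤ m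

namespace AbsorbedAt

variable {Q : Type*} {f : Q → Q} {z p : Q} {d e : ℕ}

theorem unique (hd : AbsorbedAt f z p d) (he : AbsorbedAt f z p e) : d = e :=
  eq_of_forall_ge_iff fun m => (hd m).symm.trans (he m)

theorem isFixedPt (h : AbsorbedAt f z p d) : Function.IsFixedPt f z := by
  have hsucc := (h (d + 1)).2 d.le_succ
  rwa [Function.iterate_succ_apply', (h d).2 le_rfl] at hsucc

theorem zero_iff (hz : Function.IsFixedPt f z) : AbsorbedAt f z p 0 ↔ p = z := by
  refine ⟨fun h => (h 0).2 le_rfl, ?_⟩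
  rintro rfl m
  simp [(hz.iterate m).eq]

theorem succ_iff : AbsorbedAt f z p (d + 1) ↔ p ≠ z ∧ AbsorbedAt f z (f p) d := by
  refine ⟨fun h => ⟨by simpa using h 0, fun m => by simpa using h (m + 1)⟩, ?_⟩
  rintro ⟨hp, h⟩ (_ | m)
  · simpa using hp
  · simpa using h m

end AbsorbedAt

variable {ι Q : Type*} {f : ι → Q → Q} {σ : ι → ι} {q : ℕ → Q} {n : ℕ}

theorem absorbedAt_one_of_cross (hn : 0 < n) (hσ : σ.Surjective)
    (hq : ∀ p, ∃ k ≤ n + 1, q k = p)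
    (hcross : ∀ s, ∀ k < n, AbsorbedAt (f (σ s)) (q (n + 1)) (f s (q k)) (n - k)) (s : ι) :
    AbsorbedAt (f s) (q (n + 1)) (q n) 1 := by
  obtain ⟨t, rfl⟩ := hσ s
  obtain ⟨m, hm, hmt⟩ := hq (f t (q (n - 1)))
  have hone : AbsorbedAt (f (σ t)) (q (n + 1)) (q m) 1 := by
    simpa [hmt, Nat.sub_sub_self hn] using hcross t (n - 1) (by omega)
  obtain ⟨hne, hzero⟩ := AbsorbedAt.succ_iff.1 hone
  have hmn : ¬ m < n := fun hmn => by
    have := (hcross (σ t) m hmn 0).1 ((AbsorbedAt.zero_iff hone.isFixedPt).1 hzero)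
    omega
  have hm_ne : m ≠ n + 1 := by rintro rfl; exact hne rfl
  rwa [show m = n by omega] at hone

theorem absorbedAt_iff_of_cross (hn : 0 < n) (hσ : σ.Surjective)
    (hq : ∀ p, ∃ k ≤ n + 1, q k = p)
    (hcross : ∀ s, ∀ k < n, AbsorbedAt (f (σ s)) (q (n + 1)) (f s (q k)) (n - k))
    {d : ℕ} (hd : d ≤ n) (s : ι) (p : Q) :
    AbsorbedAt (f s) (q (n + 1)) p d ↔ p = q (n + 1 - d) := by
  have hlast := absorbedAt_one_of_cross hn hσ hq hcross
  induction d generalizing s p with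
  | zero => exact AbsorbedAt.zero_iff (hlast s).isFixedPt
  | succ d ih =>
    replace ih := ih (by omega)
    have eq_of_absorbed {p : Q} (hp : AbsorbedAt (f s) (q (n + 1)) p (d + 1)) :
        p = q (n + 1 - (d + 1)) := by
      obtain ⟨m, hm, rfl⟩ := hq p
      obtain ⟨hne, hstep⟩ := AbsorbedAt.succ_iff.1 hp
      have hm_ne : m ≠ n + 1 := by rintro rfl; exact hne rfl
      obtain rfl | hmn : m = n ∨ m < n := by omega
      · rw [hp.unique (hlast s), Nat.add_sub_cancel]
      · have hσd := (ih (σ s) _).2 ((ih s _).1 hstep)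
        have : n - m = d := (hcross s m hmn).unique hσd
        congr 1
        omega
    refine ⟨eq_of_absorbed, ?_⟩
    rintro rfl
    obtain ⟨t, rfl⟩ := hσ s
    have hexists := hcross t (n - (d + 1)) (by omega)
    rw [Nat.sub_sub_self hd] at hexists
    rwa [← eq_of_absorbed hexists]

theorem apply_eq_succ_of_cross (hn : 0 < n) (hσ : σ.Surjective)
    (hq : ∀ p, ∃ k ≤ n + 1, q k = p)
    (hcross : ∀ s, ∀ k < n, AbsorbedAt (f (σ s)) (q (n + 1)) (f s (q k)) (n - k))
    (s : ι) {k : ℕ} (hk : k ≤ n) : f s (q k) = q (k + 1) := by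
  obtain rfl | hk := hk.eq_or_lt
  · have hlast := absorbedAt_one_of_cross hn hσ hq hcross s
    exact (AbsorbedAt.zero_iff hlast.isFixedPt).1 (AbsorbedAt.succ_iff.1 hlast).2
  · rw [(absorbedAt_iff_of_cross hn hσ hq hcross (Nat.sub_le n k) (σ s) _).1 (hcross s k hk)]
    congr 1
    omega

end Absorption

section Recurrence

theorem eq_sub_of_eq_neg_sum {G : Type*} [AddCommGroup G] {W : Bool → ℕ → G} {n : ℕ}
    (hW : ∀ s, ∀ j < n, W s j = -∑ k ∈ Finset.Icc (j + 1) n, W (!s) k)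
    (s : Bool) {j : ℕ} (hj : j + 1 < n) : W s j = W s (j + 1) - W (!s) (j + 1) := by
  rw [hW s j (by omega), hW s (j + 1) hj, ← Finset.add_sum_Ioc_eq_sum_Icc hj.le,
    ← Finset.Icc_add_one_left_eq_Ioc]
  abel

theorem eq_two_pow_mul_sub_of_eq_neg_sum {R : Type*} [Ring R] {W : Bool → ℕ → R} {n : ℕ}
    (hW : ∀ s, ∀ j < n, W s j = -∑ k ∈ Finset.Icc (j + 1) n, W (!s) k)
    (s : Bool) {k : ℕ} (hk : k + 1 < n) : W s 0 = 2 ^ k * (W s (k + 1) - W (!s) (k + 1)) := by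
  induction k with
  | zero => simpa using eq_sub_of_eq_neg_sum hW s hk
  | succ k ih =>
    have hdouble : W s (k + 1) - W (!s) (k + 1) = 2 * (W s (k + 2) - W (!s) (k + 2)) := by
      rw [eq_sub_of_eq_neg_sum hW s hk, eq_sub_of_eq_neg_sum hW (!s) hk, Bool.not_not]
      noncomm_ring
    rw [ih (by omega), hdouble, pow_succ, mul_assoc]

theorem eq_two_pow_mul_add_of_eq_neg_sum {R : Type*} [Ring R] {W : Bool → ℕ → R} {n : ℕ}
    (hn : 1 < n) (hW : ∀ s, ∀ j < n, W s j = -∑ k ∈ Finset.Icc (j + 1) n, W (!s) k)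
    (s : Bool) : W s 0 = 2 ^ (n - 2) * (W s (n - 1) + W s n) := by
  have hlast : W (!s) (n - 1) = -W s n := by
    simpa [Nat.sub_add_cancel hn.le] using hW (!s) (n - 1) (by omega)
  rw [eq_two_pow_mul_sub_of_eq_neg_sum hW s (k := n - 2) (by omega),
    show n - 2 + 1 = n - 1 by omega, hlast, sub_neg_eq_add]

end Recurrence

section Prefixes

variable {α : Type*} {x y z : α} {u v : List α} {k l : ℕ}

theorem replicate_prefix_replicate_append_cons_iff (hy : y ≠ z) :
    List.replicate l z <+: List.replicate k z ++ y :: v ↔ l ≤ k := by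
  induction l generalizing k with
  | zero => simp
  | succ l ih => cases k <;> simp [List.replicate_succ, List.cons_prefix_cons, ih, hy.symm]

theorem replicate_append_cons_prefix_iff (hx : x ≠ z) (hy : y ≠ z) :
    List.replicate l z ++ x :: u <+: List.replicate k z ++ y :: v ↔
      l = k ∧ x = y ∧ u <+: v := by
  induction l generalizing k with
  | zero => cases k <;> simp [List.replicate_succ, List.cons_prefix_cons, hx]
  | succ l ih => cases k <;> simp [List.replicate_succ, List.cons_prefix_cons, ih, hy.symm]

end Prefixes

namespace DWA

variable {A Q : Type} (M : DWA A Q)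

theorem valFrom_append (p : Q) (u v : List A) :
    M.valFrom p (u ++ v) = M.valFrom p u + M.valFrom (M.run p u) v := by
  induction u generalizing p with
  | nil => simp [valFrom, run]
  | cons x u ih => simp [valFrom, run, ih, add_assoc]

theorem run_replicate (p : Q) (x : A) (m : ℕ) :
    M.run p (List.replicate m x) = (M.δ · x)^[m] p := by
  induction m generalizing p with
  | zero => rfl
  | succ _ ih => exact ih (M.δ p x)

theorem valFrom_replicate_of_chain {q : ℕ → Q} {x : A} {n : ℕ}
    (hq : ∀ k < n, M.δ (q k) x = q (k + 1)) {k : ℕ} (hk : k ≤ n) :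
    M.valFrom (q k) (List.replicate (n - k) x) = ∑ l ∈ Finset.Ico k n, M.c (q l) x := by
  induction hk using Nat.decreasingInduction with
  | self => simp [valFrom]
  | of_succ k hk ih =>
    rw [Finset.sum_eq_sum_Ico_succ_bot hk, ← ih, ← hq k hk,
      show n - k = n - (k + 1) + 1 by omega, List.replicate_succ, valFrom]

/-- A state is dead when every word read from it has value zero. -/
def Dead (p : Q) : Prop := ∀ w, M.valFrom p w = 0

theorem dead_run_iff {p : Q} {u : List A} :
    M.Dead (M.run p u) ↔ ∀ v, M.valFrom p (u ++ v) = M.valFrom p u := by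
  simp [Dead, valFrom_append]

/-- The state `q_k = δ̂(q₀, i^k)`. -/
def iState (M : DWA ABI Q) (k : ℕ) : Q := M.run M.init (List.replicate k ABI.i)

theorem iState_add (M : DWA ABI Q) (k l : ℕ) :
    M.iState (k + l) = M.run (M.iState k) (List.replicate l ABI.i) := by
  simp only [iState, run, List.replicate_add, List.foldl_append]

end DWA

/-- The letters `a` (for `true`) and `b` (for `false`): the symmetry exchanging `a` and `b` becomes
Boolean negation. -/
def ABI.ofBool : Bool → ABI
  | true => a
  | false => b

theorem ABI.ofBool_ne_i (s : Bool) : ofBool s ≠ i := by cases s <;> simp [ofBool]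

theorem ABI.ofBool_injective : Function.Injective ofBool := by decide

section Observation

variable {n k : ℕ} {w : List ABI}

open ABI (ofBool)

theorem obs_eq_one_iff : Obs n w = 1 ↔ (∀ x ∈ w, x = ABI.i) ∨
    List.replicate (n + 1) ABI.i <+: w ∨
    ∃ s, ∃ l < n,
      List.replicate l ABI.i ++ ofBool s :: List.replicate (n - l) (ofBool !s) <+: w := by
  rw [Bool.exists_bool, or_comm (a := ∃ l < n, _)]
  unfold Obs
  split_ifs <;> simp_all [ofBool]

theorem obs_replicate_append_cons_eq_one_iff {s : Bool} :
    Obs n (List.replicate k ABI.i ++ ofBool s :: w) = 1 ↔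
      n < k ∨ k < n ∧ List.replicate (n - k) (ofBool !s) <+: w := by
  have hmem : ¬ ∀ x ∈ List.replicate k ABI.i ++ ofBool s :: w, x = ABI.i := fun h =>
    ABI.ofBool_ne_i s (h _ (by simp))
  simp only [obs_eq_one_iff, hmem, false_or, Nat.succ_le_iff,
    replicate_prefix_replicate_append_cons_iff (ABI.ofBool_ne_i _),
    replicate_append_cons_prefix_iff (ABI.ofBool_ne_i _) (ABI.ofBool_ne_i _),
    ABI.ofBool_injective.eq_iff]
  simp

theorem obs_replicate_append_a_eq_two (hk : k ≤ n) :
    Obs n (List.replicate k ABI.i ++ [ABI.a]) = 2 := by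
  have hne : Obs n (List.replicate k ABI.i ++ [ofBool true]) ≠ 1 := by
    rw [Ne, obs_replicate_append_cons_eq_one_iff, List.prefix_nil, List.replicate_eq_nil_iff]
    omega
  have hprefix : ∃ l, List.replicate l ABI.i ++ [ABI.a] <+: List.replicate k ABI.i ++ [ABI.a] :=
    ⟨k, List.prefix_rfl⟩
  unfold Obs at hne ⊢
  split_ifs at hne ⊢ <;> simp_all [ofBool]

end Observation

namespace Realizes

variable {n k : ℕ} {Q : Type} {M : DWA ABI Q}

open ABI (ofBool)

theorem valFrom_iState (hM : Realizes n M) (k : ℕ) (w : List ABI) :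
    M.valFrom (M.iState k) w = M.val (List.replicate k ABI.i ++ w) := by
  have hzero : M.val (List.replicate k ABI.i) = 0 := by
    obtain rfl | hk := Nat.eq_zero_or_pos k
    · rfl
    · refine (hM _ (by simp [hk.ne'])).2.1.2 (obs_eq_one_iff.2 (.inl ?_))
      simp
  rw [DWA.val] at hzero ⊢
  rw [M.valFrom_append, hzero, zero_add, DWA.iState]

theorem valFrom_iState_cons_eq_zero_iff (hM : Realizes n M) {s : Bool} {w : List ABI} :
    M.valFrom (M.iState k) (ofBool s :: w) = 0 ↔
      n < k ∨ k < n ∧ List.replicate (n - k) (ofBool !s) <+: w := by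
  rw [hM.valFrom_iState, (hM _ (by simp)).2.1, obs_replicate_append_cons_eq_one_iff]

theorem c_iState_a_pos (hM : Realizes n M) (hk : k ≤ n) : 0 < M.c (M.iState k) ABI.a := by
  have hpos : 0 < M.valFrom (M.iState k) [ABI.a] := by
    rw [hM.valFrom_iState]
    exact (hM _ (by simp)).2.2.2 (obs_replicate_append_a_eq_two hk)
  simpa [DWA.valFrom] using hpos

theorem dead_iState_iff (hM : Realizes n M) : M.Dead (M.iState k) ↔ n < k := by
  constructor
  · intro hdead
    by_contra! hk
    have hpos := hM.c_iState_a_pos hk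
    have hzero := hdead [ABI.a]
    simp only [DWA.valFrom, add_zero] at hzero
    exact hpos.ne' hzero
  · intro hk w
    have hprefix : List.replicate (n + 1) ABI.i <+: List.replicate k ABI.i ++ w := by
      refine List.IsPrefix.trans ?_ (List.prefix_append _ _)
      simpa [List.prefix_replicate_iff] using hk
    rw [hM.valFrom_iState]
    exact (hM _ (by rintro h; simp [h] at hprefix)).2.1.2
      (obs_eq_one_iff.2 (.inr (.inl hprefix)))

theorem iState_injective (hM : Realizes n M) :
    Function.Injective fun k : Fin (n + 2) => M.iState k := by
  refine Function.Injective.of_lt_imp_ne fun j k hjk heq => ?_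
  have hdead : M.Dead (M.iState (j + (n + 1 - k))) := by
    rw [M.iState_add, show M.iState j = M.iState k from heq, ← M.iState_add, hM.dead_iState_iff]
    omega
  rw [hM.dead_iState_iff] at hdead
  omega

section MinimalSize

variable [Fintype Q]

theorem exists_iState_eq (hM : Realizes n M) (hcard : Fintype.card Q = n + 2) (p : Q) :
    ∃ k ≤ n + 1, M.iState k = p := by
  have hbij := (Fintype.bijective_iff_injective_and_card _).2
    ⟨hM.iState_injective, by simp [hcard]⟩
  obtain ⟨k, hk⟩ := hbij.surjective p
  exact ⟨k, by omega, hk⟩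

theorem dead_iff_eq_iState (hM : Realizes n M) (hcard : Fintype.card Q = n + 2) {p : Q} :
    M.Dead p ↔ p = M.iState (n + 1) := by
  constructor
  · intro hdead
    obtain ⟨k, hk, rfl⟩ := hM.exists_iState_eq hcard p
    rw [hM.dead_iState_iff] at hdead
    rw [show k = n + 1 by omega]
  · rintro rfl
    exact hM.dead_iState_iff.2 n.lt_succ_self

theorem absorbedAt_δ_iState (hM : Realizes n M) (hcard : Fintype.card Q = n + 2) (s : Bool)
    (hk : k < n) :
    AbsorbedAt (M.δ · (ofBool !s)) (M.iState (n + 1)) (M.δ (M.iState k) (ofBool s)) (n - k) := by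
  intro m
  have hval (m : ℕ) : M.valFrom (M.iState k)
      (ofBool s :: List.replicate m (ofBool !s)) = 0 ↔ n - k ≤ m := by
    simp [hM.valFrom_iState_cons_eq_zero_iff, hk, hk.not_gt, List.prefix_replicate_iff]
  have hrun : M.run (M.δ (M.iState k) (ofBool s)) (List.replicate m (ofBool !s)) =
      M.run (M.iState k) (ofBool s :: List.replicate m (ofBool !s)) := rfl
  rw [← M.run_replicate, ← hM.dead_iff_eq_iState hcard, hrun, M.dead_run_iff]
  constructor
  · intro h
    rw [← hval, ← h (List.replicate (n - k) (ofBool !s)), List.cons_append,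
      ← List.replicate_add, hval]
    exact Nat.le_add_left _ _
  · intro hm v
    have hprefix : List.replicate (n - k) (ofBool !s) <+: List.replicate m (ofBool !s) ++ v := by
      refine List.IsPrefix.trans ?_ (List.prefix_append _ _)
      simpa [List.prefix_replicate_iff] using hm
    rw [(hval m).2 hm, List.cons_append, hM.valFrom_iState_cons_eq_zero_iff]
    exact .inr ⟨hk, hprefix⟩

theorem δ_iState (hM : Realizes n M) (hcard : Fintype.card Q = n + 2) (hn : 0 < n) (s : Bool)
    (hk : k ≤ n) : M.δ (M.iState k) (ofBool s) = M.iState (k + 1) :=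
  apply_eq_succ_of_cross (f := fun s p => M.δ p (ofBool s)) hn Bool.involutive_not.surjective
    (hM.exists_iState_eq hcard) (fun s _ hk => hM.absorbedAt_δ_iState hcard s hk) s hk

theorem c_iState_eq_neg_sum (hM : Realizes n M) (hcard : Fintype.card Q = n + 2) (s : Bool)
    (hk : k < n) : M.c (M.iState k) (ofBool s) =
      -∑ l ∈ Finset.Icc (k + 1) n, M.c (M.iState l) (ofBool !s) := by
  have hn : 0 < n := by omega
  have hzero : M.valFrom (M.iState k) (ofBool s :: List.replicate (n - k) (ofBool !s)) = 0 :=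
    hM.valFrom_iState_cons_eq_zero_iff.2 (.inr ⟨hk, List.prefix_rfl⟩)
  have hδ : ∀ l < n + 1, M.δ (M.iState l) (ofBool !s) = M.iState (l + 1) :=
    fun _ hl => hM.δ_iState hcard hn (!s) (Nat.le_of_lt_succ hl)
  have hchain := M.valFrom_replicate_of_chain hδ (by omega : k + 1 ≤ n + 1)
  rw [Nat.add_sub_add_right, Finset.Ico_add_one_right_eq_Icc] at hchain
  rw [DWA.valFrom, hM.δ_iState hcard hn s hk.le, hchain] at hzero
  exact eq_neg_of_add_eq_zero_left hzero

end MinimalSize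

end Realizes

/-- in every DWA with the minimal number `n + 2` of states realizing `O_n`,
writing `q j = δ̂(q₀, i^j)`, the weights satisfy
`c(q_j, a) = -∑_{k=j+1}^{n} c(q_k, b)` and `c(q_j, b) = -∑_{k=j+1}^{n} c(q_k, a)` for `j < n`,
hence `c(q_0, a) = 2^{n-2}·(c(q_{n-1}, a) + c(q_n, a)) ≥ 2^{n-1}`: some weight is
exponential in `n` (even though `O_n` is realized by a DWA with weights in `{-1, 0, 1}`). -/
theorem minimal_dwa_exponential_weights (n : ℕ) (hn : 1 < n) (Q : Type) [Fintype Q]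
    (M : DWA ABI Q) (hcard : Fintype.card Q = n + 2) (hM : Realizes n M) :
    let q : ℕ → Q := fun j => M.run M.init (List.replicate j ABI.i)
    (∀ j < n,
      M.c (q j) ABI.a = -∑ k ∈ Finset.Icc (j + 1) n, M.c (q k) ABI.b ∧
      M.c (q j) ABI.b = -∑ k ∈ Finset.Icc (j + 1) n, M.c (q k) ABI.a) ∧
    M.c (q 0) ABI.a = 2 ^ (n - 2) * (M.c (q (n - 1)) ABI.a + M.c (q n) ABI.a) ∧
    (2 : ℤ) ^ (n - 1) ≤ M.c (q 0) ABI.a := by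
  intro q
  have hsum (s : Bool) (j : ℕ) (hj : j < n) : M.c (q j) (ABI.ofBool s) =
      -∑ k ∈ Finset.Icc (j + 1) n, M.c (q k) (ABI.ofBool !s) :=
    hM.c_iState_eq_neg_sum hcard s hj
  have hpow : M.c (q 0) ABI.a = 2 ^ (n - 2) * (M.c (q (n - 1)) ABI.a + M.c (q n) ABI.a) :=
    eq_two_pow_mul_add_of_eq_neg_sum hn hsum true
  refine ⟨fun j hj => ⟨hsum true j hj, hsum false j hj⟩, hpow, ?_⟩
  have hpred : 1 ≤ M.c (q (n - 1)) ABI.a := hM.c_iState_a_pos (n.sub_le 1)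
  have hlast : 1 ≤ M.c (q n) ABI.a := hM.c_iState_a_pos le_rfl
  calc (2 : ℤ) ^ (n - 1) = 2 ^ (n - 2) * (1 + 1) := by
        rw [one_add_one_eq_two, ← pow_succ, show n - 2 + 1 = n - 1 by omega]
    _ ≤ 2 ^ (n - 2) * (M.c (q (n - 1)) ABI.a + M.c (q n) ABI.a) := by gcongr
    _ = M.c (q 0) ABI.a := hpow.symm
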